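/- arXiv:2203.00142 — 6 statements merged into one kernel-verified Lean document; each statement's English description precedes it below -/
import Mathlib

section
/- For the first-order Kuramoto model on the complete graph with n vertices: suppose the initial data satisfy ρ_1(0) > ρ_j(0) for all 2 ≤ j ≤ n (so ρ_1(0) is the unique maximum). Then for every solution ρ and every t ≥ 0, ρ_1(t) − max_{2≤j≤n} ρ_j(t) ≥ ρ_1(0) − max_{2≤j≤n} ρ_j(0); in particular the leading gap is nondecreasing in time. -/
/-- The maximum of `f` over all vertices different from `i0` (well-defined since `n ≥ 2`). -/
noncomputable def maxExcept {n : ℕ} (hn : 2 ≤ n) (i0 : Fin n) (f : Fin n → ℝ) : ℝ :=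
  (Finset.univ.erase i0).sup'
    (by
      rw [Finset.erase_nonempty (Finset.mem_univ i0)]
      exact Finset.one_lt_card_iff_nontrivial.mp
        (by simp only [Finset.card_univ, Fintype.card_fin]; omega)) f

/-!
The coupling `b ↦ θ (min b c) * (b - c)` need not be monotone, but if `0 ≤ c ≤ a` then on `[0, a]`
it is largest at `b = a`. So while vertex `i` dominates all the others, every gap
`ρ i - ρ j` has nonnegative derivative. Gaps that start out positive therefore cannot reach zero:
up to the first time one of them vanishes they are all nondecreasing. Hence `i` dominates forever,
each gap is nondecreasing, and so is their minimum over `j ≠ i`.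
-/

open Set

section Barrier

variable {ι : Type*} [Finite ι] {a : ℝ} {g g' : ι → ℝ → ℝ}

theorem forall_pos_of_hasDerivWithinAt_nonneg_of_forall_pos
    (hg : ∀ t ∈ Ici a, ∀ j, HasDerivWithinAt (g j) (g' j t) (Ici a) t)
    (hg' : ∀ t ∈ Ici a, (∀ j, 0 < g j t) → ∀ j, 0 ≤ g' j t) (ha : ∀ j, 0 < g j a) :
    ∀ t ∈ Ici a, ∀ j, 0 < g j t := by
  have hcont (j : ι) : ContinuousOn (g j) (Ici a) := fun t ht => (hg t ht j).continuousWithinAt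
  let exitTimes : Set ℝ := ⋃ j, Ici a ∩ g j ⁻¹' Iic 0
  have hclosed : IsClosed exitTimes := isClosed_iUnion_of_finite fun j =>
    (hcont j).preimage_isClosed_of_isClosed isClosed_Ici isClosed_Iic
  have hbdd : BddBelow exitTimes := ⟨a, fun _ ht => (mem_iUnion.1 ht).elim fun _ h => h.1⟩
  by_contra! ⟨t, ht, j, hj⟩
  obtain ⟨i, haT, hiT⟩ : ∃ i, sInf exitTimes ∈ Ici a ∩ g i ⁻¹' Iic 0 :=
    mem_iUnion.1 (hclosed.csInf_mem ⟨t, mem_iUnion.2 ⟨j, ht, hj⟩⟩ hbdd)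
  have hpos : ∀ s ∈ Ioo a (sInf exitTimes), ∀ k, 0 < g k s := fun s hs k =>
    not_le.1 fun hk => notMem_of_lt_csInf hs.2 hbdd (mem_iUnion.2 ⟨k, hs.1.le, hk⟩)
  have hmono : MonotoneOn (g i) (Icc a (sInf exitTimes)) := by
    refine monotoneOn_of_hasDerivWithinAt_nonneg (f' := g' i) (convex_Icc _ _)
      ((hcont i).mono Icc_subset_Ici_self) ?_ ?_ <;> rw [interior_Icc] <;> intro s hs
    · exact (hg s hs.1.le i).mono (Ioo_subset_Ioi_self.trans Ioi_subset_Ici_self)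
    · exact hg' s hs.1.le (hpos s hs) i
  have hle : g i a ≤ g i (sInf exitTimes) :=
    hmono (left_mem_Icc.2 haT) (right_mem_Icc.2 haT) haT
  exact ((ha i).trans_le hle).not_ge hiT

theorem monotoneOn_Ici_of_hasDerivWithinAt_nonneg_of_forall_pos
    (hg : ∀ t ∈ Ici a, ∀ j, HasDerivWithinAt (g j) (g' j t) (Ici a) t)
    (hg' : ∀ t ∈ Ici a, (∀ j, 0 < g j t) → ∀ j, 0 ≤ g' j t) (ha : ∀ j, 0 < g j a) (j : ι) :
    MonotoneOn (g j) (Ici a) :=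
  have hpos := forall_pos_of_hasDerivWithinAt_nonneg_of_forall_pos hg hg' ha
  monotoneOn_of_hasDerivWithinAt_nonneg (convex_Ici a)
    (fun t ht => (hg t ht j).continuousWithinAt)
    (fun t ht => (hg t (interior_subset ht) j).mono interior_subset)
    (fun t ht => hg' t (interior_subset ht) (hpos t (interior_subset ht)) j)

end Barrier

theorem monotoneOn_sub_sup' {α β ι : Type*} [Preorder α] [AddCommGroup β] [SemilatticeSup β]
    [IsOrderedAddMonoid β] {S : Set α} {f : α → β} {g : α → ι → β} {s : Finset ι}
    (hs : s.Nonempty) (h : ∀ j ∈ s, MonotoneOn (fun t => f t - g t j) S) :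
    MonotoneOn (fun t => f t - s.sup' hs (g t)) S := by
  intro t ht u hu htu
  suffices s.sup' hs (g u) ≤ f u - (f t - s.sup' hs (g t)) from le_sub_comm.1 this
  refine Finset.sup'_le hs _ fun j hj => le_sub_comm.1 ?_
  calc f t - s.sup' hs (g t) ≤ f t - g t j := sub_le_sub_left (Finset.le_sup' (g t) hj) _
    _ ≤ f u - g u j := h j hj ht hu htu

theorem coupling_le_coupling_of_le {θ : ℝ → ℝ} (hθ : ∀ x, 0 ≤ x → 0 ≤ θ x) {a b c : ℝ}
    (hb : 0 ≤ b) (hc : 0 ≤ c) (hba : b ≤ a) (hca : c ≤ a) :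
    θ (min b c) * (b - c) ≤ θ (min a c) * (a - c) := by
  rw [min_eq_right hca]
  rcases le_total b c with hbc | hcb
  · calc θ (min b c) * (b - c) ≤ 0 :=
        mul_nonpos_of_nonneg_of_nonpos (hθ _ (le_min hb hc)) (sub_nonpos.2 hbc)
      _ ≤ θ c * (a - c) := mul_nonneg (hθ c hc) (sub_nonneg.2 hca)
  · rw [min_eq_right hcb]
    exact mul_le_mul_of_nonneg_left (sub_le_sub_right hba c) (hθ c hc)

section Kuramoto

variable {ι : Type*} [Fintype ι] {κ : ℝ} {θ : ℝ → ℝ}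

/-- The `j`-th component of the vector field of the first-order Kuramoto model on the complete
graph with vertex set `ι`. The term `k = j` of the sum vanishes, so it need not be excluded. -/
def kuramotoField (κ : ℝ) (θ : ℝ → ℝ) (x : ι → ℝ) (j : ι) : ℝ :=
  κ * ∑ k, θ (min (x j) (x k)) * (x j - x k)

theorem kuramotoField_le_of_forall_le (hκ : 0 ≤ κ) (hθ : ∀ x, 0 ≤ x → 0 ≤ θ x) {x : ι → ℝ}
    (hx : ∀ k, 0 ≤ x k) {i : ι} (hi : ∀ k, x k ≤ x i) (j : ι) :
    kuramotoField κ θ x j ≤ kuramotoField κ θ x i :=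
  mul_le_mul_of_nonneg_left
    (Finset.sum_le_sum fun k _ => coupling_le_coupling_of_le hθ (hx j) (hx k) (hi j) (hi k)) hκ

variable {ρ : ℝ → ι → ℝ} {i : ι}

theorem kuramoto_monotoneOn_sub (hκ : 0 ≤ κ) (hθ : ∀ x, 0 ≤ x → 0 ≤ θ x)
    (hρ : ∀ t ∈ Ici (0 : ℝ), ∀ j,
      HasDerivWithinAt (fun s => ρ s j) (kuramotoField κ θ (ρ t) j) (Ici 0) t)
    (hnonneg : ∀ t ∈ Ici (0 : ℝ), ∀ j, 0 ≤ ρ t j) (hmax : ∀ j, j ≠ i → ρ 0 j < ρ 0 i)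
    {j : ι} (hj : j ≠ i) :
    MonotoneOn (fun t => ρ t i - ρ t j) (Ici 0) := by
  refine monotoneOn_Ici_of_hasDerivWithinAt_nonneg_of_forall_pos (ι := {j // j ≠ i})
    (g := fun j t => ρ t i - ρ t j)
    (g' := fun j t => kuramotoField κ θ (ρ t) i - kuramotoField κ θ (ρ t) j)
    (fun t ht k => (hρ t ht i).sub (hρ t ht k)) (fun t ht hpos k => ?_)
    (fun k => sub_pos.2 (hmax k k.2)) ⟨j, hj⟩
  have hdom (l : ι) : ρ t l ≤ ρ t i := by
    rcases eq_or_ne l i with rfl | hl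
    · exact le_rfl
    · exact (sub_pos.1 (hpos ⟨l, hl⟩)).le
  exact sub_nonneg.2 (kuramotoField_le_of_forall_le hκ hθ (hnonneg t ht) hdom k)

theorem kuramoto_complete_gap_nondecreasing_general [DecidableEq ι]
    (hκ : 0 ≤ κ) (hθ : ∀ x, 0 ≤ x → 0 ≤ θ x)
    (hρ : ∀ t ∈ Ici (0 : ℝ), ∀ j,
      HasDerivWithinAt (fun s => ρ s j) (kuramotoField κ θ (ρ t) j) (Ici 0) t)
    (hnonneg : ∀ t ∈ Ici (0 : ℝ), ∀ j, 0 ≤ ρ t j) (hmax : ∀ j, j ≠ i → ρ 0 j < ρ 0 i)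
    (hne : (Finset.univ.erase i).Nonempty) :
    MonotoneOn (fun t => ρ t i - (Finset.univ.erase i).sup' hne (ρ t)) (Ici 0) :=
  monotoneOn_sub_sup' hne fun _ hj =>
    kuramoto_monotoneOn_sub hκ hθ hρ hnonneg hmax (Finset.ne_of_mem_erase hj)

end Kuramoto

/-- First-order Kuramoto model on the complete graph with `n` vertices:
if vertex `1` (here the vertex `i0` with `i0.val = 0`) is the unique initial maximizer,
then the leading gap `ρ_1(t) - max_{j ≠ 1} ρ_j(t)` is bounded below by its initial value
for all `t ≥ 0`. -/
theorem kuramoto_complete_gap_nondecreasing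
    (n : ℕ) (hn : 2 ≤ n) (κ : ℝ) (hκ : 0 < κ)
    (θm : ℝ → ℝ) (L : NNReal) (hθlip : LipschitzWith L θm) (hθmono : Monotone θm)
    (hθ0 : θm 0 = 0) (hθpos : ∀ x : ℝ, 0 < x → 0 < θm x)
    (ρ : ℝ → Fin n → ℝ)
    (hode : ∀ t ≥ (0 : ℝ), ∀ j : Fin n, HasDerivAt (fun s => ρ s j)
      (κ * ∑ k : Fin n, θm (min (ρ t j) (ρ t k)) * (ρ t j - ρ t k)) t)
    (hrange : ∀ t ≥ (0 : ℝ), ∀ j : Fin n, ρ t j ∈ Set.Icc (0 : ℝ) 1)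
    (hsum : ∀ t ≥ (0 : ℝ), ∑ j : Fin n, ρ t j = 1)
    (i0 : Fin n) (hi0 : (i0 : ℕ) = 0)
    (hmax : ∀ j : Fin n, j ≠ i0 → ρ 0 j < ρ 0 i0) :
    ∀ t ≥ (0 : ℝ),
      ρ 0 i0 - maxExcept hn i0 (ρ 0) ≤ ρ t i0 - maxExcept hn i0 (ρ t) := by
  intro t ht
  have hθ : ∀ x, 0 ≤ x → 0 ≤ θm x := fun x hx => hθ0.symm.trans_le (hθmono hx)
  exact kuramoto_complete_gap_nondecreasing_general hκ.le hθ
    (fun s hs j => (hode s hs j).hasDerivWithinAt) (fun s hs j => (hrange s hs j).1) hmax _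
    self_mem_Ici ht ht
end

section
/- Consider the first-order Kuramoto model on the complete graph with n vertices with κ = 1 and θ̃(x) = x (the case α = 1). Suppose the initial data satisfy ρ_1(0) > ρ_j(0) for all 2 ≤ j ≤ n, and set δ = ρ_1(0) − max_{2≤j≤n} ρ_j(0) > 0. Then every solution ρ satisfies, for all t ≥ 0, (1 − ρ_1(0))·e^{−n t} ≤ 1 − ρ_1(t) ≤ (1 − ρ_1(0))·e^{−δ t}; in particular ρ_1(t) converges to 1 exponentially fast. -/
/-!
Let `θ` be `L`-Lipschitz with `θ 0 = 0` and `m * x ≤ θ x`. The coupling `θ (min x z) * (x - z)` is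
Lipschitz in `x`, so the difference `u` of two masses satisfies `|u'| ≤ C * |u|` and cannot change
sign: an initial leader leads forever. The coupling with a given `z` is larger for the leading mass
than for any other mass, so the leader's gaps never shrink and stay at least `δ`. Per unit time the
leader therefore gains at least `κ * m * δ * z` from each other vertex of mass `z`, while no vertex
gains more than `κ * L * z`. As the masses other than `ρ_i` sum to `1 - ρ_i`, Grönwall's inequality
gives both exponential bounds.
-/

open Set
open scoped NNReal

section DifferentialInequalities

variable {f f' : ℝ → ℝ} {a K t : ℝ}

theorem le_mul_exp_of_hasDerivWithinAt_le
    (hf : ∀ s ∈ Ici a, HasDerivWithinAt f (f' s) (Ici a) s) (hf' : ∀ s ∈ Ici a, f' s ≤ K * f s)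
    (ht : a ≤ t) : f t ≤ f a * Real.exp (K * (t - a)) := by
  rw [← gronwallBound_ε0]
  refine le_gronwallBound_of_liminf_deriv_right_le (f' := f') (b := t)
    (fun s hs ↦ (hf s hs.1).continuousWithinAt.mono Icc_subset_Ici_self)
    (fun s hs r hr ↦ ?_) le_rfl (fun s hs ↦ by simpa using hf' s hs.1) t ⟨ht, le_rfl⟩
  exact ((hf s hs.1).mono (Ici_subset_Ici.2 hs.1)).liminf_right_slope_le hr

theorem nonneg_of_abs_hasDerivWithinAt_le
    (hf : ∀ s ∈ Ici a, HasDerivWithinAt f (f' s) (Ici a) s)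
    (hf' : ∀ s ∈ Ici a, |f' s| ≤ K * |f s|) (ha : 0 ≤ f a) (ht : a ≤ t) : 0 ≤ f t := by
  by_contra! hneg
  have hcont : ContinuousOn f (Ici a) := fun s hs ↦ (hf s hs).continuousWithinAt
  obtain ⟨s, hs, hfs⟩ : 0 ∈ f '' Icc a t :=
    intermediate_value_Icc' ht (hcont.mono Icc_subset_Ici_self) ⟨hneg.le, ha⟩
  have hft : f t = 0 := eq_zero_of_abs_deriv_le_mul_abs_self_of_eq_zero_right
    (hcont.mono fun r hr ↦ hs.1.trans hr.1)
    (fun r hr ↦ (hf r (hs.1.trans hr.1)).mono (Ici_subset_Ici.2 (hs.1.trans hr.1)))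
    hfs (fun r hr ↦ hf' r (hs.1.trans hr.1)) t ⟨hs.2, le_rfl⟩
  exact hneg.ne hft

end DifferentialInequalities

/-- The interaction term `θ̃(min(x, y)) (x - y)` of the Kuramoto model: the rate at which a vertex
of mass `x` gains mass from a vertex of mass `y`, up to the coupling strength `κ`. -/
def kuramotoCoupling (θ : ℝ → ℝ) (x y : ℝ) : ℝ :=
  θ (min x y) * (x - y)

section Coupling

variable {θ : ℝ → ℝ} {L : ℝ≥0} {m δ x y z : ℝ}

theorem kuramotoCoupling_self : kuramotoCoupling θ x x = 0 := by
  rw [kuramotoCoupling, sub_self, mul_zero]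

theorem kuramotoCoupling_of_le (h : y ≤ x) : kuramotoCoupling θ x y = θ y * (x - y) := by
  rw [kuramotoCoupling, min_eq_right h]

theorem abs_le_mul_of_lipschitzOnWith (hθ : LipschitzOnWith L θ (Icc 0 1)) (hθ0 : θ 0 = 0)
    (hx : x ∈ Icc (0 : ℝ) 1) : |θ x| ≤ L * x := by
  simpa [Real.dist_eq, hθ0, abs_of_nonneg hx.1] using
    hθ.dist_le_mul x hx 0 ⟨le_rfl, zero_le_one⟩

theorem abs_kuramotoCoupling_le (hθ : LipschitzOnWith L θ (Icc 0 1)) (hθ0 : θ 0 = 0)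
    (hx : x ∈ Icc (0 : ℝ) 1) (hy : y ∈ Icc (0 : ℝ) 1) :
    |kuramotoCoupling θ x y| ≤ L * min x y :=
  calc |kuramotoCoupling θ x y| = |θ (min x y)| * |x - y| := abs_mul _ _
    _ ≤ |θ (min x y)| * 1 := by gcongr; exact Real.dist_le_of_mem_Icc_01 hx hy
    _ ≤ L * min x y := by
      rw [mul_one]
      exact abs_le_mul_of_lipschitzOnWith hθ hθ0 (min_rec' (· ∈ Icc (0 : ℝ) 1) hx hy)

theorem abs_kuramotoCoupling_sub_le (hθ : LipschitzOnWith L θ (Icc 0 1)) (hθ0 : θ 0 = 0)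
    (hx : x ∈ Icc (0 : ℝ) 1) (hy : y ∈ Icc (0 : ℝ) 1) (hz : z ∈ Icc (0 : ℝ) 1) :
    |kuramotoCoupling θ x z - kuramotoCoupling θ y z| ≤ 2 * L * |x - y| := by
  have hxz : min x z ∈ Icc (0 : ℝ) 1 := min_rec' (· ∈ Icc (0 : ℝ) 1) hx hz
  have hyz : min y z ∈ Icc (0 : ℝ) 1 := min_rec' (· ∈ Icc (0 : ℝ) 1) hy hz
  have hθ_le : |θ (min x z)| ≤ L :=
    (abs_le_mul_of_lipschitzOnWith hθ hθ0 hxz).trans (mul_le_of_le_one_right L.2 hxz.2)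
  have hθ_sub : |θ (min x z) - θ (min y z)| ≤ L * |x - y| := by
    have hmin : |min x z - min y z| ≤ |x - y| := by
      simpa using abs_min_sub_min_le_max x z y z
    exact (hθ.dist_le_mul _ hxz _ hyz).trans (mul_le_mul_of_nonneg_left hmin L.2)
  calc |kuramotoCoupling θ x z - kuramotoCoupling θ y z|
      = |θ (min x z) * (x - y) + (θ (min x z) - θ (min y z)) * (y - z)| := by
        unfold kuramotoCoupling; ring_nf
    _ ≤ |θ (min x z)| * |x - y| + |θ (min x z) - θ (min y z)| * |y - z| := by
        simpa only [abs_mul] using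
          abs_add_le (θ (min x z) * (x - y)) ((θ (min x z) - θ (min y z)) * (y - z))
    _ ≤ L * |x - y| + L * |x - y| * 1 := by
        gcongr; exact Real.dist_le_of_mem_Icc_01 hy hz
    _ = 2 * L * |x - y| := by ring

theorem kuramotoCoupling_le_of_le_of_le (hy : 0 ≤ θ y) (hz : 0 ≤ θ z) (hyx : y ≤ x)
    (hzx : z ≤ x) : kuramotoCoupling θ y z ≤ kuramotoCoupling θ x z := by
  rw [kuramotoCoupling_of_le hzx]
  rcases le_total y z with hyz | hzy
  · calc kuramotoCoupling θ y z = θ y * (y - z) := by rw [kuramotoCoupling, min_eq_left hyz]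
      _ ≤ 0 := mul_nonpos_of_nonneg_of_nonpos hy (sub_nonpos.2 hyz)
      _ ≤ θ z * (x - z) := mul_nonneg hz (sub_nonneg.2 hzx)
  · rw [kuramotoCoupling_of_le hzy]
    gcongr

theorem mul_le_kuramotoCoupling (hm : 0 ≤ m) (hy : 0 ≤ y) (hmθ : m * y ≤ θ y) (hδ : 0 ≤ δ)
    (hgap : δ ≤ x - y) : m * δ * y ≤ kuramotoCoupling θ x y := by
  rw [kuramotoCoupling_of_le (sub_nonneg.1 (hδ.trans hgap)), mul_right_comm]
  exact mul_le_mul hmθ hgap hδ ((mul_nonneg hm hy).trans hmθ)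

variable {V : Type*} [Fintype V] {w : V → ℝ}

theorem sum_kuramotoCoupling_le (hθ : LipschitzOnWith L θ (Icc 0 1)) (hθ0 : θ 0 = 0)
    (hw : ∀ k, w k ∈ Icc (0 : ℝ) 1) (i : V) :
    ∑ k, kuramotoCoupling θ (w i) (w k) ≤ L * (∑ k, w k - w i) := by
  classical
  rw [← Finset.sum_erase (a := i) (f := fun k ↦ kuramotoCoupling θ (w i) (w k)) _
      kuramotoCoupling_self,
    ← Finset.sum_erase_eq_sub (Finset.mem_univ i), Finset.mul_sum]
  refine Finset.sum_le_sum fun k _ ↦ ?_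
  calc kuramotoCoupling θ (w i) (w k) ≤ L * min (w i) (w k) :=
        (le_abs_self _).trans (abs_kuramotoCoupling_le hθ hθ0 (hw i) (hw k))
    _ ≤ L * w k := by gcongr; exact min_le_right _ _

theorem le_sum_kuramotoCoupling (hm : 0 ≤ m) (hw : ∀ k, 0 ≤ w k)
    (hmθ : ∀ k, m * w k ≤ θ (w k)) (hδ : 0 ≤ δ) {i : V} (hgap : ∀ k ≠ i, δ ≤ w i - w k) :
    m * δ * (∑ k, w k - w i) ≤ ∑ k, kuramotoCoupling θ (w i) (w k) := by
  classical
  rw [← Finset.sum_erase (a := i) (f := fun k ↦ kuramotoCoupling θ (w i) (w k)) _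
      kuramotoCoupling_self,
    ← Finset.sum_erase_eq_sub (Finset.mem_univ i), Finset.mul_sum]
  exact Finset.sum_le_sum fun k hk ↦
    mul_le_kuramotoCoupling hm (hw k) (hmθ k) hδ (hgap k (Finset.ne_of_mem_erase hk))

end Coupling

/-- A solution of the first-order Kuramoto model on the complete graph with vertex set `V`, coupling
strength `κ` and nonlinearity `θ`, where `ρ t j` is the mass of vertex `j` at time `t`. Derivatives
at time `0` are one-sided, and the bound `ρ t j ≤ 1` is left to follow from the total mass. -/
structure IsKuramotoSolution {V : Type*} [Fintype V] (κ : ℝ) (θ : ℝ → ℝ) (ρ : ℝ → V → ℝ) :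
    Prop where
  hasDerivWithinAt : ∀ t ∈ Ici (0 : ℝ), ∀ j, HasDerivWithinAt (fun s ↦ ρ s j)
    (κ * ∑ k, kuramotoCoupling θ (ρ t j) (ρ t k)) (Ici 0) t
  nonneg : ∀ t ∈ Ici (0 : ℝ), ∀ j, 0 ≤ ρ t j
  sum_eq_one : ∀ t ∈ Ici (0 : ℝ), ∑ j, ρ t j = 1

namespace IsKuramotoSolution

variable {V : Type*} [Fintype V] {κ : ℝ} {θ : ℝ → ℝ} {ρ : ℝ → V → ℝ} {L : ℝ≥0} {m δ t : ℝ}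
  {i j : V}

theorem mem_Icc (h : IsKuramotoSolution κ θ ρ) (ht : 0 ≤ t) (j : V) : ρ t j ∈ Icc (0 : ℝ) 1 :=
  ⟨h.nonneg t ht j, h.sum_eq_one t ht ▸
    Finset.single_le_sum (fun k _ ↦ h.nonneg t ht k) (Finset.mem_univ j)⟩

theorem hasDerivWithinAt_sub (h : IsKuramotoSolution κ θ ρ) (ht : 0 ≤ t) (i j : V) :
    HasDerivWithinAt (fun s ↦ ρ s i - ρ s j)
      (κ * ∑ k, (kuramotoCoupling θ (ρ t i) (ρ t k) - kuramotoCoupling θ (ρ t j) (ρ t k)))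
      (Ici 0) t := by
  rw [Finset.sum_sub_distrib, mul_sub]
  exact (h.hasDerivWithinAt t ht i).sub (h.hasDerivWithinAt t ht j)

theorem le_of_initial_le (h : IsKuramotoSolution κ θ ρ) (hθ : LipschitzOnWith L θ (Icc 0 1))
    (hθ0 : θ 0 = 0) (hij : ρ 0 j ≤ ρ 0 i) (ht : 0 ≤ t) : ρ t j ≤ ρ t i := by
  refine sub_nonneg.1 (nonneg_of_abs_hasDerivWithinAt_le (f := fun s ↦ ρ s i - ρ s j)
    (K := |κ| * (Fintype.card V * (2 * L))) (fun s hs ↦ h.hasDerivWithinAt_sub hs i j)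
    (fun s hs ↦ ?_) (sub_nonneg.2 hij) ht)
  rw [abs_mul, mul_assoc, mul_assoc, ← nsmul_eq_mul]
  refine mul_le_mul_of_nonneg_left ?_ (abs_nonneg κ)
  exact (Finset.abs_sum_le_sum_abs _ _).trans <| Finset.sum_le_card_nsmul _ _ _ fun k _ ↦
    abs_kuramotoCoupling_sub_le hθ hθ0 (h.mem_Icc hs i) (h.mem_Icc hs j) (h.mem_Icc hs k)

theorem initial_gap_le_gap (h : IsKuramotoSolution κ θ ρ) (hκ : 0 ≤ κ)
    (hθ : LipschitzOnWith L θ (Icc 0 1)) (hθ0 : θ 0 = 0) (hθ_nonneg : ∀ x ∈ Icc 0 1, 0 ≤ θ x)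
    (hlead : ∀ k, ρ 0 k ≤ ρ 0 i) (j : V) (ht : 0 ≤ t) : ρ 0 i - ρ 0 j ≤ ρ t i - ρ t j := by
  have hmono : MonotoneOn (fun s ↦ ρ s i - ρ s j) (Ici 0) := by
    refine monotoneOn_of_hasDerivWithinAt_nonneg (convex_Ici 0)
      (fun s hs ↦ (h.hasDerivWithinAt_sub hs i j).continuousWithinAt)
      (fun s hs ↦ (h.hasDerivWithinAt_sub (interior_subset hs) i j).mono interior_subset)
      (fun s hs ↦ mul_nonneg hκ (Finset.sum_nonneg fun k _ ↦ sub_nonneg.2 ?_))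
    have hs : 0 ≤ s := interior_subset hs
    exact kuramotoCoupling_le_of_le_of_le (hθ_nonneg _ (h.mem_Icc hs j))
      (hθ_nonneg _ (h.mem_Icc hs k)) (h.le_of_initial_le hθ hθ0 (hlead j) hs)
      (h.le_of_initial_le hθ hθ0 (hlead k) hs)
  exact hmono self_mem_Ici ht ht

theorem mul_exp_le_one_sub (h : IsKuramotoSolution κ θ ρ) (hκ : 0 ≤ κ)
    (hθ : LipschitzOnWith L θ (Icc 0 1)) (hθ0 : θ 0 = 0) (i : V) (ht : 0 ≤ t) :
    (1 - ρ 0 i) * Real.exp (-(κ * L) * t) ≤ 1 - ρ t i := by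
  have hgronwall := le_mul_exp_of_hasDerivWithinAt_le (f := fun s ↦ ρ s i - 1) (K := -(κ * L))
    (fun s hs ↦ (h.hasDerivWithinAt s hs i).sub_const 1) (fun s hs ↦ ?_) ht
  · rw [sub_zero] at hgronwall
    linarith
  · calc κ * ∑ k, kuramotoCoupling θ (ρ s i) (ρ s k)
        ≤ κ * (L * (∑ k, ρ s k - ρ s i)) := by
          gcongr; exact sum_kuramotoCoupling_le hθ hθ0 (h.mem_Icc hs) i
      _ = -(κ * L) * (ρ s i - 1) := by rw [h.sum_eq_one s hs]; ring

theorem one_sub_le_mul_exp (h : IsKuramotoSolution κ θ ρ) (hκ : 0 ≤ κ)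
    (hθ : LipschitzOnWith L θ (Icc 0 1)) (hθ0 : θ 0 = 0) (hm : 0 ≤ m)
    (hmθ : ∀ x ∈ Icc 0 1, m * x ≤ θ x) (hδ : 0 ≤ δ) (hgap : ∀ j ≠ i, δ ≤ ρ 0 i - ρ 0 j)
    (ht : 0 ≤ t) : 1 - ρ t i ≤ (1 - ρ 0 i) * Real.exp (-(κ * m * δ) * t) := by
  have hlead (k : V) : ρ 0 k ≤ ρ 0 i := by
    rcases eq_or_ne k i with rfl | hk
    · exact le_rfl
    · exact sub_nonneg.1 (hδ.trans (hgap k hk))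
  have hθ_nonneg (x : ℝ) (hx : x ∈ Icc (0 : ℝ) 1) : 0 ≤ θ x :=
    (mul_nonneg hm hx.1).trans (hmθ x hx)
  have hgronwall := le_mul_exp_of_hasDerivWithinAt_le (f := fun s ↦ 1 - ρ s i)
    (K := -(κ * m * δ)) (fun s hs ↦ (h.hasDerivWithinAt s hs i).const_sub 1) (fun s hs ↦ ?_) ht
  · rwa [sub_zero] at hgronwall
  · have hgain : m * δ * (∑ k, ρ s k - ρ s i) ≤ ∑ k, kuramotoCoupling θ (ρ s i) (ρ s k) :=
      le_sum_kuramotoCoupling hm (h.nonneg s hs) (fun k ↦ hmθ _ (h.mem_Icc hs k)) hδ fun k hk ↦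
        (hgap k hk).trans (h.initial_gap_le_gap hκ hθ hθ0 hθ_nonneg hlead k hs)
    rw [h.sum_eq_one s hs] at hgain
    linarith [mul_le_mul_of_nonneg_left hgain hκ]

end IsKuramotoSolution

theorem kuramoto_complete_exponential_convergence_general {V : Type*} [Fintype V] {κ : ℝ}
    {θ : ℝ → ℝ} {ρ : ℝ → V → ℝ} (h : IsKuramotoSolution κ θ ρ) (hκ : 0 ≤ κ) {L : ℝ≥0}
    (hθ : LipschitzOnWith L θ (Icc 0 1)) (hθ0 : θ 0 = 0) {m : ℝ} (hm : 0 ≤ m)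
    (hmθ : ∀ x ∈ Icc 0 1, m * x ≤ θ x) {i : V} {δ : ℝ} (hδ : 0 ≤ δ)
    (hgap : ∀ j ≠ i, δ ≤ ρ 0 i - ρ 0 j) {t : ℝ} (ht : 0 ≤ t) :
    (1 - ρ 0 i) * Real.exp (-(κ * L) * t) ≤ 1 - ρ t i ∧
      1 - ρ t i ≤ (1 - ρ 0 i) * Real.exp (-(κ * m * δ) * t) :=
  ⟨h.mul_exp_le_one_sub hκ hθ hθ0 i ht, h.one_sub_le_mul_exp hκ hθ hθ0 hm hmθ hδ hgap ht⟩

theorem le_maxExcept {n : ℕ} (hn : 2 ≤ n) {i j : Fin n} (hj : j ≠ i) (f : Fin n → ℝ) :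
    f j ≤ maxExcept hn i f :=
  Finset.le_sup' f (Finset.mem_erase.2 ⟨hj, Finset.mem_univ j⟩)

/-- First-order Kuramoto model on the complete graph with `n` vertices,
`κ = 1` and `θ̃(x) = x` (the case `α = 1`): if vertex `1` (the index `i0` with
`i0.val = 0`) is the unique initial maximizer and `δ` is the initial leading gap, then
`(1-ρ_1(0)) e^{-n t} ≤ 1-ρ_1(t) ≤ (1-ρ_1(0)) e^{-δ t}` for all `t ≥ 0`; in particular
`ρ_1(t) → 1` exponentially fast. -/
theorem kuramoto_complete_exponential_convergence
    (n : ℕ) (hn : 2 ≤ n)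
    (ρ : ℝ → Fin n → ℝ)
    (hode : ∀ t ≥ (0 : ℝ), ∀ j : Fin n, HasDerivAt (fun s => ρ s j)
      (∑ k : Fin n, min (ρ t j) (ρ t k) * (ρ t j - ρ t k)) t)
    (hrange : ∀ t ≥ (0 : ℝ), ∀ j : Fin n, ρ t j ∈ Set.Icc (0 : ℝ) 1)
    (hsum : ∀ t ≥ (0 : ℝ), ∑ j : Fin n, ρ t j = 1)
    (i0 : Fin n) (hi0 : (i0 : ℕ) = 0)
    (hmax : ∀ j : Fin n, j ≠ i0 → ρ 0 j < ρ 0 i0)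
    (δ : ℝ) (hδ : δ = ρ 0 i0 - maxExcept hn i0 (ρ 0)) (hδpos : 0 < δ) :
    ∀ t ≥ (0 : ℝ),
      (1 - ρ 0 i0) * Real.exp (-(n : ℝ) * t) ≤ 1 - ρ t i0 ∧
      1 - ρ t i0 ≤ (1 - ρ 0 i0) * Real.exp (-δ * t) := by
  intro t ht
  have hsol : IsKuramotoSolution 1 id ρ :=
    { hasDerivWithinAt := fun s hs j ↦ by
        simpa only [one_mul] using! (hode s hs j).hasDerivWithinAt
      nonneg := fun s hs j ↦ (hrange s hs j).1
      sum_eq_one := hsum }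
  have hgap (j : Fin n) (hj : j ≠ i0) : δ ≤ ρ 0 i0 - ρ 0 j :=
    hδ.trans_le (sub_le_sub_left (le_maxExcept hn hj (ρ 0)) _)
  obtain ⟨hlower, hupper⟩ := kuramoto_complete_exponential_convergence_general hsol zero_le_one
    LipschitzWith.id.lipschitzOnWith rfl zero_le_one (fun x _ ↦ (one_mul x).le) hδpos.le hgap ht
  simp only [NNReal.coe_one, one_mul] at hlower hupper
  have hn1 : (1 : ℝ) ≤ n := by exact_mod_cast one_le_two.trans hn
  have hmass : 0 ≤ 1 - ρ 0 i0 := sub_nonneg.2 (hrange 0 le_rfl i0).2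
  exact ⟨le_trans (by gcongr) hlower, hupper⟩
end

section
/- For the first-order Kuramoto model on a general graph with n vertices: every solution ρ satisfies, for all t ≥ 0, (d/dt) Σ_{j=1}^n ρ_j(t)² = κ · Σ_{j,l=1}^n ω_{jl} · θ̃(min(ρ_j(t), ρ_l(t))) · (ρ_j(t) − ρ_l(t))², and in particular the quantity Σ_j ρ_j(t)² is nondecreasing in time. -/
/-!
Differentiating the energy `∑ j, ρ j ^ 2` gives `2 κ ∑ j, ∑ l, a j l * (ρ j - ρ l) * ρ j` with
`a j l = ω j l * θ (min (ρ j) (ρ l))`. As `a` is symmetric, exchanging `j` and `l` turns the factor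
`2 ρ j` into `ρ j - ρ l`, and every term of the resulting sum of weighted squares is nonnegative.
-/

theorem two_mul_sum_mul_sum_mul_sub_eq_sum_sum_mul_sub_sq {ι R : Type*} [Fintype ι] [CommRing R]
    {a : ι → ι → R} (ha : ∀ j l, a j l = a l j) (x : ι → R) :
    2 * ∑ j, x j * ∑ l, a j l * (x j - x l) = ∑ j, ∑ l, a j l * (x j - x l) ^ 2 := by
  have swap : ∑ j, ∑ l, x j * (a j l * (x j - x l)) = ∑ j, ∑ l, x l * (a j l * (x l - x j)) := by
    rw [Finset.sum_comm]
    simp only [ha]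
  calc 2 * ∑ j, x j * ∑ l, a j l * (x j - x l)
      = ∑ j, ∑ l, x j * (a j l * (x j - x l)) + ∑ j, ∑ l, x l * (a j l * (x l - x j)) := by
        rw [← swap, ← two_mul]
        simp only [Finset.mul_sum]
    _ = ∑ j, ∑ l, a j l * (x j - x l) ^ 2 := by
        simp only [← Finset.sum_add_distrib]
        refine Finset.sum_congr rfl fun j _ => Finset.sum_congr rfl fun l _ => ?_
        ring

section LaplacianFlow

variable {ι : Type*} [Fintype ι]

theorem hasDerivAt_sum_sq_of_symm {𝕜 : Type*} [NontriviallyNormedField 𝕜] {κ t : 𝕜}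
    {a : ι → ι → 𝕜} {ρ : 𝕜 → ι → 𝕜} (ha : ∀ j l, a j l = a l j)
    (hρ : ∀ j, HasDerivAt (fun s => ρ s j) (κ * ∑ l, a j l * (ρ t j - ρ t l)) t) :
    HasDerivAt (fun s => ∑ j, ρ s j ^ 2) (κ * ∑ j, ∑ l, a j l * (ρ t j - ρ t l) ^ 2) t := by
  refine (HasDerivAt.fun_sum fun j _ => (hρ j).fun_pow 2).congr_deriv ?_
  rw [← two_mul_sum_mul_sum_mul_sub_eq_sum_sum_mul_sub_sq ha, Finset.mul_sum, Finset.mul_sum]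
  refine Finset.sum_congr rfl fun j _ => ?_
  push_cast
  ring

theorem monotoneOn_sum_sq_of_symm_of_nonneg {κ : ℝ} (hκ : 0 ≤ κ) {S : Set ℝ} (hS : Convex ℝ S)
    {a : ℝ → ι → ι → ℝ} {ρ : ℝ → ι → ℝ} (ha : ∀ t ∈ S, ∀ j l, a t j l = a t l j)
    (ha_nonneg : ∀ t ∈ S, ∀ j l, 0 ≤ a t j l)
    (hρ : ∀ t ∈ S, ∀ j,
      HasDerivAt (fun s => ρ s j) (κ * ∑ l, a t j l * (ρ t j - ρ t l)) t) :
    MonotoneOn (fun t => ∑ j, ρ t j ^ 2) S := by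
  have hderiv : ∀ t ∈ S, HasDerivAt (fun s => ∑ j, ρ s j ^ 2)
      (κ * ∑ j, ∑ l, a t j l * (ρ t j - ρ t l) ^ 2) t :=
    fun t ht => hasDerivAt_sum_sq_of_symm (ha t ht) (hρ t ht)
  refine monotoneOn_of_hasDerivWithinAt_nonneg hS
    (fun t ht => (hderiv t ht).continuousAt.continuousWithinAt)
    (fun t ht => (hderiv t (interior_subset ht)).hasDerivWithinAt) fun t ht => ?_
  exact mul_nonneg hκ <| Finset.sum_nonneg fun j _ => Finset.sum_nonneg fun l _ =>
    mul_nonneg (ha_nonneg t (interior_subset ht) j l) (sq_nonneg _)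

end LaplacianFlow

theorem kuramoto_graph_energy_derivative_general {ι : Type*} [Fintype ι] {κ : ℝ} (hκ : 0 ≤ κ)
    {ω : ι → ι → ℝ} (hω_nonneg : ∀ j l, 0 ≤ ω j l) (hω_symm : ∀ j l, ω j l = ω l j)
    {θ : ℝ → ℝ} (hθ_nonneg : ∀ x, 0 ≤ x → 0 ≤ θ x)
    {ρ : ℝ → ι → ℝ}
    (hρ : ∀ t ≥ (0 : ℝ), ∀ j, HasDerivAt (fun s => ρ s j)
      (κ * ∑ l, ω j l * θ (min (ρ t j) (ρ t l)) * (ρ t j - ρ t l)) t)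
    (hρ_nonneg : ∀ t ≥ (0 : ℝ), ∀ j, 0 ≤ ρ t j) :
    (∀ t ≥ (0 : ℝ), HasDerivAt (fun s => ∑ j, ρ s j ^ 2)
      (κ * ∑ j, ∑ l, ω j l * θ (min (ρ t j) (ρ t l)) * (ρ t j - ρ t l) ^ 2) t) ∧
    MonotoneOn (fun t => ∑ j, ρ t j ^ 2) (Set.Ici 0) := by
  let a (t : ℝ) (j l : ι) : ℝ := ω j l * θ (min (ρ t j) (ρ t l))
  have ha_symm (t : ℝ) (j l : ι) : a t j l = a t l j := by
    simp only [a, hω_symm j l, min_comm (ρ t j)]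
  have ha_nonneg (t : ℝ) (ht : 0 ≤ t) (j l : ι) : 0 ≤ a t j l :=
    mul_nonneg (hω_nonneg j l) (hθ_nonneg _ (le_min (hρ_nonneg t ht j) (hρ_nonneg t ht l)))
  exact ⟨fun t ht => hasDerivAt_sum_sq_of_symm (ha_symm t) (hρ t ht),
    monotoneOn_sum_sq_of_symm_of_nonneg hκ (convex_Ici 0) (fun t _ => ha_symm t) ha_nonneg hρ⟩

/-- First-order Kuramoto model on a general graph with `n` vertices,
given by symmetric `{0,1}`-valued adjacency weights `ω` with zero diagonal:
`dρ_j/dt = κ Σ_l ω_{jl} θ̃(min(ρ_j, ρ_l)) (ρ_j - ρ_l)`.  Every solution satisfies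
`(d/dt) Σ_j ρ_j² = κ Σ_{j,l} ω_{jl} θ̃(min(ρ_j, ρ_l)) (ρ_j - ρ_l)²` for all `t ≥ 0`,
and in particular `Σ_j ρ_j²` is nondecreasing in time. -/
theorem kuramoto_graph_energy_derivative
    (n : ℕ) (hn : 2 ≤ n) (κ : ℝ) (hκ : 0 < κ)
    (ω : Fin n → Fin n → ℝ)
    (hω01 : ∀ j l : Fin n, ω j l = 0 ∨ ω j l = 1)
    (hωsym : ∀ j l : Fin n, ω j l = ω l j)
    (hωdiag : ∀ j : Fin n, ω j j = 0)
    (θm : ℝ → ℝ) (L : NNReal) (hθlip : LipschitzWith L θm) (hθmono : Monotone θm)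
    (hθ0 : θm 0 = 0) (hθpos : ∀ x : ℝ, 0 < x → 0 < θm x)
    (ρ : ℝ → Fin n → ℝ)
    (hode : ∀ t ≥ (0 : ℝ), ∀ j : Fin n, HasDerivAt (fun s => ρ s j)
      (κ * ∑ l : Fin n, ω j l * θm (min (ρ t j) (ρ t l)) * (ρ t j - ρ t l)) t)
    (hrange : ∀ t ≥ (0 : ℝ), ∀ j : Fin n, ρ t j ∈ Set.Icc (0 : ℝ) 1)
    (hsum : ∀ t ≥ (0 : ℝ), ∑ j : Fin n, ρ t j = 1) :
    (∀ t ≥ (0 : ℝ), HasDerivAt (fun s => ∑ j : Fin n, (ρ s j) ^ 2)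
      (κ * ∑ j : Fin n, ∑ l : Fin n,
        ω j l * θm (min (ρ t j) (ρ t l)) * (ρ t j - ρ t l) ^ 2) t) ∧
    MonotoneOn (fun t => ∑ j : Fin n, (ρ t j) ^ 2) (Set.Ici (0 : ℝ)) := by
  have hω_nonneg (j l : Fin n) : 0 ≤ ω j l := by
    rcases hω01 j l with h | h <;> simp [h]
  exact kuramoto_graph_energy_derivative_general hκ.le hω_nonneg hωsym
    (fun _ hx => hθ0.symm.le.trans (hθmono hx)) hode fun t ht j => (hrange t ht j).1
end

section
/- For the first-order Kuramoto model on a general graph with n vertices: for every solution ρ and every pair of adjacent vertices j, l (i.e. ω_{jl} = 1), one has lim_{t→∞} θ̃(min(ρ_j(t), ρ_l(t))) · (ρ_j(t) − ρ_l(t))² = 0. -/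
/-!
Along a solution of `x' = κ L_W(x) x`, where `L_W(x)` is the Laplacian of symmetric nonnegative
weights `W x` that depend continuously on the state, the function `‖x‖² / (2κ)` has derivative
`⟨x, L_W(x) x⟩ = ½ ∑ W(x)ᵢⱼ (xᵢ - xⱼ)² ≥ 0`. If the solution stays in a compact set, this function
is bounded, hence convergent, and its derivative is uniformly continuous in time, so by Barbalat's
lemma the derivative tends to zero. It dominates the contribution of each single edge. The Kuramoto
model is the case `W(x)ᵢⱼ = ωᵢⱼ θ(min(xᵢ, xⱼ))`.
-/

open Filter Set Topology

section Barbalat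

variable {E : Type*} [NormedAddCommGroup E] [NormedSpace ℝ E]

theorem norm_sub_sub_smul_le_of_norm_deriv_sub_le {f f' : ℝ → E} {t h ε : ℝ} (hh : 0 ≤ h)
    (hf : ∀ s ∈ Icc t (t + h), HasDerivWithinAt f (f' s) (Icc t (t + h)) s)
    (hε : ∀ s ∈ Ico t (t + h), ‖f' s - f' t‖ ≤ ε) :
    ‖f (t + h) - f t - h • f' t‖ ≤ ε * h := by
  have hderiv : ∀ s ∈ Icc t (t + h),
      HasDerivWithinAt (fun s ↦ f s - s • f' t) (f' s - f' t) (Icc t (t + h)) s := fun s hs ↦ by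
    simpa using (hf s hs).fun_sub ((hasDerivWithinAt_id s _).smul_const (f' t))
  have hmean := norm_image_sub_le_of_norm_deriv_le_segment' hderiv hε (t + h)
    (right_mem_Icc.2 (le_add_of_nonneg_right hh))
  calc ‖f (t + h) - f t - h • f' t‖
      = ‖f (t + h) - (t + h) • f' t - (f t - t • f' t)‖ := by congr 1; module
    _ ≤ ε * h := by simpa using hmean

theorem tendsto_deriv_zero_of_uniformContinuousOn {f f' : ℝ → E} {a : ℝ} {c : E}
    (hf : ∀ t ≥ a, HasDerivAt f (f' t) t) (huc : UniformContinuousOn f' (Ici a))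
    (hlim : Tendsto f atTop (𝓝 c)) : Tendsto f' atTop (𝓝 0) := by
  rw [NormedAddGroup.tendsto_nhds_zero]
  intro ε hε
  obtain ⟨δ, hδ, hf'⟩ := Metric.uniformContinuousOn_iff.1 huc (ε / 2) (half_pos hε)
  have hincr : Tendsto (fun t ↦ f (t + δ) - f t) atTop (𝓝 0) := by
    simpa using (hlim.comp (tendsto_atTop_add_const_right atTop δ tendsto_id)).sub hlim
  filter_upwards [eventually_ge_atTop a,
    NormedAddGroup.tendsto_nhds_zero.1 hincr (δ * (ε / 2)) (by positivity)] with t ht hsmall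
  have herror : ‖f (t + δ) - f t - δ • f' t‖ ≤ ε / 2 * δ := by
    refine norm_sub_sub_smul_le_of_norm_deriv_sub_le hδ.le
      (fun s hs ↦ (hf s (ht.trans hs.1)).hasDerivWithinAt) fun s hs ↦ ?_
    rw [← dist_eq_norm]
    refine (hf' s (ht.trans hs.1) t ht ?_).le
    rw [Real.dist_eq, abs_of_nonneg (sub_nonneg.2 hs.1)]
    linarith [hs.2]
  have hscaled : δ * ‖f' t‖ < δ * ε :=
    calc δ * ‖f' t‖ = ‖δ • f' t‖ := by rw [norm_smul, Real.norm_of_nonneg hδ.le]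
      _ ≤ ‖f (t + δ) - f t‖ + ‖f (t + δ) - f t - δ • f' t‖ := by
        simpa using norm_sub_le (f (t + δ) - f t) (f (t + δ) - f t - δ • f' t)
      _ < δ * (ε / 2) + ε / 2 * δ := add_lt_add_of_lt_of_le hsmall herror
      _ = δ * ε := by ring
  exact lt_of_mul_lt_mul_left hscaled hδ.le

end Barbalat

section Lyapunov

theorem exists_tendsto_atTop_of_monotoneOn_Ici {α β : Type*} [LinearOrder α]
    [ConditionallyCompleteLinearOrder β] [TopologicalSpace β] [SupConvergenceClass β]
    {f : α → β} {a : α} (hf : MonotoneOn f (Ici a)) (hbdd : BddAbove (f '' Ici a)) :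
    ∃ c, Tendsto f atTop (𝓝 c) := by
  have hmono : Monotone fun t ↦ f (max a t) := fun s t hst ↦
    hf (le_max_left a s) (le_max_left a t) (max_le_max_left a hst)
  have hrange : range (fun t ↦ f (max a t)) ⊆ f '' Ici a :=
    range_subset_iff.2 fun t ↦ mem_image_of_mem f (le_max_left a t)
  refine ⟨_, (tendsto_atTop_ciSup hmono (hbdd.mono hrange)).congr' ?_⟩
  filter_upwards [eventually_ge_atTop a] with t ht
  rw [max_eq_right ht]

theorem exists_tendsto_atTop_of_hasDerivAt_nonneg {f f' : ℝ → ℝ} {a : ℝ}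
    (hf : ∀ t ≥ a, HasDerivAt f (f' t) t) (hf' : ∀ t ≥ a, 0 ≤ f' t)
    (hbdd : BddAbove (f '' Ici a)) : ∃ c, Tendsto f atTop (𝓝 c) := by
  refine exists_tendsto_atTop_of_monotoneOn_Ici ?_ hbdd
  exact monotoneOn_of_hasDerivWithinAt_nonneg (convex_Ici a)
    (fun t ht ↦ (hf t ht).continuousAt.continuousWithinAt)
    (fun t ht ↦ (hf t (interior_subset ht)).hasDerivWithinAt)
    fun t ht ↦ hf' t (interior_subset ht)

variable {E : Type*} [NormedAddCommGroup E] [NormedSpace ℝ E] {K : Set E} {F : E → E}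
  {x : ℝ → E} {a : ℝ}

theorem uniformContinuousOn_Ici_of_hasDerivAt_of_isCompact (hK : IsCompact K)
    (hF : ContinuousOn F K) (hxK : ∀ t ≥ a, x t ∈ K) (hx : ∀ t ≥ a, HasDerivAt x (F (x t)) t) :
    UniformContinuousOn x (Ici a) := by
  obtain ⟨C, hC⟩ := hK.exists_bound_of_continuousOn hF
  have hlip : LipschitzOnWith C.toNNReal x (Ici a) :=
    (convex_Ici a).lipschitzOnWith_of_nnnorm_hasDerivWithin_le
      (fun t ht ↦ (hx t ht).hasDerivWithinAt)
      fun t ht ↦ NNReal.le_toNNReal_of_coe_le (hC (x t) (hxK t ht))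
  exact hlip.uniformContinuousOn

theorem tendsto_lyapunov_deriv_zero_of_isCompact {V G : E → ℝ} (hK : IsCompact K)
    (hF : ContinuousOn F K) (hV : ContinuousOn V K) (hG : ContinuousOn G K)
    (hG_nonneg : ∀ y ∈ K, 0 ≤ G y) (hxK : ∀ t ≥ a, x t ∈ K)
    (hx : ∀ t ≥ a, HasDerivAt x (F (x t)) t)
    (hVx : ∀ t ≥ a, HasDerivAt (fun s ↦ V (x s)) (G (x t)) t) :
    Tendsto (fun t ↦ G (x t)) atTop (𝓝 0) := by
  have hbdd : BddAbove ((fun t ↦ V (x t)) '' Ici a) := by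
    refine (hK.bddAbove_image hV).mono ?_
    rintro _ ⟨t, ht, rfl⟩
    exact mem_image_of_mem V (hxK t ht)
  obtain ⟨c, hc⟩ :=
    exists_tendsto_atTop_of_hasDerivAt_nonneg hVx (fun t ht ↦ hG_nonneg (x t) (hxK t ht)) hbdd
  have huc : UniformContinuousOn (fun t ↦ G (x t)) (Ici a) :=
    (hK.uniformContinuousOn_of_continuous hG).comp
      (uniformContinuousOn_Ici_of_hasDerivAt_of_isCompact hK hF hxK hx) hxK
  exact tendsto_deriv_zero_of_uniformContinuousOn hVx huc hc

end Lyapunov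

section WeightedLaplacian

variable {ι R : Type*} [Fintype ι]

/-- The Laplacian of the graph on `ι` with edge weights `w`, acting on a function on the vertices.
The sign is the positive one, so that the associated quadratic form is nonnegative for nonnegative
symmetric weights. -/
def weightedLaplacian [NonUnitalNonAssocRing R] (w : Matrix ι ι R) (x : ι → R) : ι → R :=
  fun i ↦ ∑ j, w i j * (x i - x j)

theorem two_mul_dotProduct_weightedLaplacian [CommRing R] {w : Matrix ι ι R} (hw : w.IsSymm)
    (x : ι → R) :
    2 * (x ⬝ᵥ weightedLaplacian w x) = ∑ i, ∑ j, w i j * (x i - x j) ^ 2 := by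
  have hexpand : x ⬝ᵥ weightedLaplacian w x = ∑ i, ∑ j, x i * (w i j * (x i - x j)) := by
    simp only [dotProduct, weightedLaplacian, Finset.mul_sum]
  have hswap : x ⬝ᵥ weightedLaplacian w x = ∑ i, ∑ j, x j * (w i j * (x j - x i)) := by
    rw [hexpand, Finset.sum_comm]
    simp only [hw.apply]
  calc 2 * (x ⬝ᵥ weightedLaplacian w x)
      = ∑ i, ∑ j, x i * (w i j * (x i - x j)) + ∑ i, ∑ j, x j * (w i j * (x j - x i)) := by
        rw [two_mul, ← hexpand, ← hswap]
    _ = ∑ i, ∑ j, w i j * (x i - x j) ^ 2 := by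
        simp only [← Finset.sum_add_distrib]
        congr! 2
        ring

theorem mul_sub_sq_le_two_mul_dotProduct_weightedLaplacian [CommRing R] [LinearOrder R]
    [IsStrictOrderedRing R] {w : Matrix ι ι R} (hw : w.IsSymm) (hw_nonneg : ∀ i j, 0 ≤ w i j)
    (x : ι → R) (i j : ι) :
    w i j * (x i - x j) ^ 2 ≤ 2 * (x ⬝ᵥ weightedLaplacian w x) := by
  have hterm : ∀ k l, 0 ≤ w k l * (x k - x l) ^ 2 := fun k l ↦
    mul_nonneg (hw_nonneg k l) (sq_nonneg _)
  calc w i j * (x i - x j) ^ 2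
      ≤ ∑ l, w i l * (x i - x l) ^ 2 :=
        Finset.single_le_sum (f := fun l ↦ w i l * (x i - x l) ^ 2) (fun l _ ↦ hterm i l)
          (Finset.mem_univ j)
    _ ≤ ∑ k, ∑ l, w k l * (x k - x l) ^ 2 :=
        Finset.single_le_sum (f := fun k ↦ ∑ l, w k l * (x k - x l) ^ 2)
          (fun k _ ↦ Finset.sum_nonneg fun l _ ↦ hterm k l) (Finset.mem_univ i)
    _ = 2 * (x ⬝ᵥ weightedLaplacian w x) := (two_mul_dotProduct_weightedLaplacian hw x).symm

theorem dotProduct_weightedLaplacian_nonneg [CommRing R] [LinearOrder R]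
    [IsStrictOrderedRing R] {w : Matrix ι ι R} (hw : w.IsSymm) (hw_nonneg : ∀ i j, 0 ≤ w i j)
    (x : ι → R) : 0 ≤ x ⬝ᵥ weightedLaplacian w x := by
  refine nonneg_of_mul_nonneg_right ?_ (zero_lt_two' R)
  rw [two_mul_dotProduct_weightedLaplacian hw]
  exact Finset.sum_nonneg fun i _ ↦ Finset.sum_nonneg fun j _ ↦
    mul_nonneg (hw_nonneg i j) (sq_nonneg _)

theorem continuousOn_weightedLaplacian {X : Type*} [TopologicalSpace X] [NonUnitalNonAssocRing R]
    [TopologicalSpace R] [IsTopologicalRing R] {w : X → Matrix ι ι R} {x : X → ι → R} {s : Set X}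
    (hw : ContinuousOn w s) (hx : ContinuousOn x s) :
    ContinuousOn (fun y ↦ weightedLaplacian (w y) (x y)) s := by
  have hw_entry : ∀ i j, ContinuousOn (fun y ↦ w y i j) s := fun i j ↦
    (continuous_id.matrix_elem i j).comp_continuousOn hw
  unfold weightedLaplacian
  fun_prop

theorem hasDerivAt_dotProduct_self {x : ℝ → ι → ℝ} {x' : ι → ℝ} {t : ℝ}
    (hx : HasDerivAt x x' t) : HasDerivAt (fun s ↦ x s ⬝ᵥ x s) (2 * (x t ⬝ᵥ x')) t := by
  have hcoord := hasDerivAt_pi.1 hx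
  have hsum := HasDerivAt.fun_sum (u := Finset.univ) fun i _ ↦ (hcoord i).fun_mul (hcoord i)
  refine hsum.congr_deriv ?_
  rw [dotProduct, Finset.mul_sum]
  congr! 1
  ring

theorem tendsto_edge_dissipation_zero_of_isCompact {W : (ι → ℝ) → Matrix ι ι ℝ}
    {K : Set (ι → ℝ)} (hK : IsCompact K) (hW : ContinuousOn W K)
    (hW_symm : ∀ y ∈ K, (W y).IsSymm) (hW_nonneg : ∀ y ∈ K, ∀ i j, 0 ≤ W y i j)
    {κ : ℝ} (hκ : κ ≠ 0) {x : ℝ → ι → ℝ} {a : ℝ} (hxK : ∀ t ≥ a, x t ∈ K)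
    (hx : ∀ t ≥ a, HasDerivAt x (κ • weightedLaplacian (W (x t)) (x t)) t) (i j : ι) :
    Tendsto (fun t ↦ W (x t) i j * (x t i - x t j) ^ 2) atTop (𝓝 0) := by
  have hlap := continuousOn_weightedLaplacian hW continuousOn_id
  have hlyapunov : ∀ t ≥ a, HasDerivAt (fun s ↦ (2 * κ)⁻¹ * (x s ⬝ᵥ x s))
      (x t ⬝ᵥ weightedLaplacian (W (x t)) (x t)) t := fun t ht ↦ by
    refine ((hasDerivAt_dotProduct_self (hx t ht)).const_mul (2 * κ)⁻¹).congr_deriv ?_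
    rw [dotProduct_smul, smul_eq_mul]
    field
  have hlim : Tendsto (fun t ↦ x t ⬝ᵥ weightedLaplacian (W (x t)) (x t)) atTop (𝓝 0) := by
    refine tendsto_lyapunov_deriv_zero_of_isCompact hK (hlap.const_smul κ)
      (V := fun y ↦ (2 * κ)⁻¹ * (y ⬝ᵥ y)) (G := fun y ↦ y ⬝ᵥ weightedLaplacian (W y) y) ?_ ?_
      (fun y hy ↦ dotProduct_weightedLaplacian_nonneg (hW_symm y hy) (hW_nonneg y hy) y)
      hxK hx hlyapunov
    · unfold dotProduct
      fun_prop
    · unfold dotProduct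
      fun_prop
  refine squeeze_zero' ?_ ?_ (by simpa using hlim.const_mul 2)
  · filter_upwards [eventually_ge_atTop a] with t ht
    exact mul_nonneg (hW_nonneg _ (hxK t ht) i j) (sq_nonneg _)
  · filter_upwards [eventually_ge_atTop a] with t ht
    exact mul_sub_sq_le_two_mul_dotProduct_weightedLaplacian (hW_symm _ (hxK t ht))
      (hW_nonneg _ (hxK t ht)) (x t) i j

end WeightedLaplacian

section Kuramoto

variable {ι : Type*}

/-- The state-dependent edge weights `ω i j * θ (min (x i) (x j))` of the Kuramoto model on the
graph with adjacency weights `ω`, which turn its right-hand side into `κ` times a weighted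
Laplacian. -/
def kuramotoWeights (ω : ι → ι → ℝ) (θ : ℝ → ℝ) (x : ι → ℝ) : Matrix ι ι ℝ :=
  Matrix.of fun i j ↦ ω i j * θ (min (x i) (x j))

theorem isSymm_kuramotoWeights {ω : ι → ι → ℝ} (hω : ∀ i j, ω i j = ω j i) (θ : ℝ → ℝ)
    (x : ι → ℝ) : (kuramotoWeights ω θ x).IsSymm :=
  Matrix.IsSymm.ext fun i j ↦ by simp only [kuramotoWeights, Matrix.of_apply, hω j i, min_comm]

theorem min_mem_Icc_of_mem_pi {α : Type*} [LinearOrder α] {a b : α} {x : ι → α}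
    (hx : x ∈ univ.pi fun _ ↦ Icc a b) (i j : ι) : min (x i) (x j) ∈ Icc a b :=
  ⟨le_min (hx i trivial).1 (hx j trivial).1, min_le_of_left_le (hx i trivial).2⟩

theorem continuousOn_kuramotoWeights (ω : ι → ι → ℝ) {θ : ℝ → ℝ} {a b : ℝ}
    (hθ : ContinuousOn θ (Icc a b)) :
    ContinuousOn (kuramotoWeights ω θ) (univ.pi fun _ ↦ Icc a b) := by
  refine continuousOn_pi.2 fun i ↦ continuousOn_pi.2 fun j ↦ continuousOn_const.mul ?_
  exact hθ.comp (by fun_prop) fun x hx ↦ min_mem_Icc_of_mem_pi hx i j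

theorem kuramoto_graph_edge_dissipation_vanishes_general [Fintype ι] {κ : ℝ} (hκ : κ ≠ 0)
    {ω : ι → ι → ℝ} (hω_nonneg : ∀ i j, 0 ≤ ω i j) (hω_symm : ∀ i j, ω i j = ω j i)
    {θ : ℝ → ℝ} {a b : ℝ} (hθ : ContinuousOn θ (Icc a b)) (hθ_nonneg : ∀ y ∈ Icc a b, 0 ≤ θ y)
    {ρ : ℝ → ι → ℝ} {t₀ : ℝ}
    (hode : ∀ t ≥ t₀, ∀ i, HasDerivAt (fun s ↦ ρ s i)
      (κ * ∑ j, ω i j * θ (min (ρ t i) (ρ t j)) * (ρ t i - ρ t j)) t)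
    (hρ : ∀ t ≥ t₀, ∀ i, ρ t i ∈ Icc a b) (i j : ι) :
    Tendsto (fun t ↦ ω i j * θ (min (ρ t i) (ρ t j)) * (ρ t i - ρ t j) ^ 2) atTop (𝓝 0) :=
  tendsto_edge_dissipation_zero_of_isCompact (isCompact_univ_pi fun _ ↦ isCompact_Icc)
    (continuousOn_kuramotoWeights ω hθ) (fun x _ ↦ isSymm_kuramotoWeights hω_symm θ x)
    (fun _ hx i j ↦ mul_nonneg (hω_nonneg i j) (hθ_nonneg _ (min_mem_Icc_of_mem_pi hx i j)))
    hκ (fun t ht i _ ↦ hρ t ht i) (fun t ht ↦ hasDerivAt_pi.2 (hode t ht)) i j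

end Kuramoto

/-- First-order Kuramoto model on a general graph with `n` vertices:
for every solution and every pair of adjacent vertices `j, l` (i.e. `ω_{jl} = 1`),
`θ̃(min(ρ_j(t), ρ_l(t))) (ρ_j(t) - ρ_l(t))² → 0` as `t → ∞`. -/
theorem kuramoto_graph_edge_dissipation_vanishes
    (n : ℕ) (hn : 2 ≤ n) (κ : ℝ) (hκ : 0 < κ)
    (ω : Fin n → Fin n → ℝ)
    (hω01 : ∀ j l : Fin n, ω j l = 0 ∨ ω j l = 1)
    (hωsym : ∀ j l : Fin n, ω j l = ω l j)
    (hωdiag : ∀ j : Fin n, ω j j = 0)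
    (θm : ℝ → ℝ) (L : NNReal) (hθlip : LipschitzWith L θm) (hθmono : Monotone θm)
    (hθ0 : θm 0 = 0) (hθpos : ∀ x : ℝ, 0 < x → 0 < θm x)
    (ρ : ℝ → Fin n → ℝ)
    (hode : ∀ t ≥ (0 : ℝ), ∀ j : Fin n, HasDerivAt (fun s => ρ s j)
      (κ * ∑ l : Fin n, ω j l * θm (min (ρ t j) (ρ t l)) * (ρ t j - ρ t l)) t)
    (hrange : ∀ t ≥ (0 : ℝ), ∀ j : Fin n, ρ t j ∈ Set.Icc (0 : ℝ) 1)
    (hsum : ∀ t ≥ (0 : ℝ), ∑ j : Fin n, ρ t j = 1)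
    (j l : Fin n) (hjl : ω j l = 1) :
    Filter.Tendsto (fun t => θm (min (ρ t j) (ρ t l)) * (ρ t j - ρ t l) ^ 2)
      Filter.atTop (nhds 0) := by
  have hω_nonneg : ∀ i k, 0 ≤ ω i k := fun i k ↦ by rcases hω01 i k with h | h <;> simp [h]
  simpa [hjl] using kuramoto_graph_edge_dissipation_vanishes_general hκ.ne' hω_nonneg hωsym
    hθlip.continuous.continuousOn (fun y hy ↦ hθ0.symm.trans_le (hθmono hy.1)) hode hrange j l
end

section
/- For the second-order Kuramoto dynamics on the two-point graph: if (r, S) : [0,∞) → ℝ² is a differentiable solution of the system, then the Hamiltonian is a constant of motion, i.e. H(r(t), S(t)) = H(r(0), S(0)) for all t ≥ 0. -/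
/-!
With respect to the conjugate variables `(r, S)` the two-point Kuramoto dynamics is Hamilton's
system `dr/dt = ∂H/∂S`, `dS/dt = -∂H/∂r`. Along a solution the chain rule therefore gives
`dH/dt = ⟪∂H/∂r, ∂H/∂S⟫ - ⟪∂H/∂S, ∂H/∂r⟫ = 0`.
-/

open ContinuousLinearMap in
theorem hasDerivWithinAt_zero_of_hamilton_equations
    {E : Type*} [NormedAddCommGroup E] [InnerProductSpace ℝ E]
    {H : E × E → ℝ} {q p : ℝ → E} {dHdq dHdp : E} {J : Set ℝ} {t : ℝ}
    (hH : HasFDerivAt H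
      ((innerSL ℝ dHdq).comp (fst ℝ E E) + (innerSL ℝ dHdp).comp (snd ℝ E E)) (q t, p t))
    (hq : HasDerivWithinAt q dHdp J t) (hp : HasDerivWithinAt p (-dHdq) J t) :
    HasDerivWithinAt (fun u ↦ H (q u, p u)) 0 J t := by
  refine (hH.comp_hasDerivWithinAt t (hq.prodMk hp)).congr_deriv ?_
  simp [real_inner_comm dHdq dHdp]

theorem eq_of_hasDerivWithinAt_zero_of_convex
    {𝕜 F : Type*} [RCLike 𝕜] [NormedAddCommGroup F] [NormedSpace 𝕜 F]
    {f : 𝕜 → F} {J : Set 𝕜} (hJ : Convex ℝ J) (hf : ∀ t ∈ J, HasDerivWithinAt f 0 J t)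
    {s t : 𝕜} (hs : s ∈ J) (ht : t ∈ J) : f t = f s := by
  have norm_sub_le : ‖f t - f s‖ ≤ 0 * ‖t - s‖ :=
    hJ.norm_image_sub_le_of_norm_hasDerivWithin_le hf (fun _ _ ↦ norm_zero.le) hs ht
  rwa [zero_mul, norm_le_zero_iff, sub_eq_zero] at norm_sub_le

/-- The Hamiltonian of the second-order Kuramoto dynamics on the two-point graph, as a function on
the phase plane of pairs `x = (r, S)`. -/
noncomputable def twoPointHamiltonian (κ : ℝ) (θ : ℝ → ℝ) (x : ℝ × ℝ) : ℝ :=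
  θ x.1 / 2 * (x.2 ^ 2 - κ ^ 2 * (2 * x.1 - 1) ^ 2)

open ContinuousLinearMap in
theorem hasFDerivAt_twoPointHamiltonian (κ : ℝ) {θ : ℝ → ℝ} {θ' r : ℝ}
    (hθ : HasDerivAt θ θ' r) (S : ℝ) :
    HasFDerivAt (twoPointHamiltonian κ θ)
      ((innerSL ℝ (1 / 2 * (S ^ 2 - κ ^ 2 * (2 * r - 1) ^ 2) * θ'
          - 2 * κ ^ 2 * (2 * r - 1) * θ r)).comp (fst ℝ ℝ ℝ)
        + (innerSL ℝ (S * θ r)).comp (snd ℝ ℝ ℝ)) (r, S) := by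
  have hhalf : HasDerivAt (fun ρ ↦ θ ρ / 2) (θ' / 2) r := hθ.div_const 2
  have hpotential : HasDerivAt (fun ρ ↦ κ ^ 2 * (2 * ρ - 1) ^ 2) (4 * κ ^ 2 * (2 * r - 1)) r :=
    (((((hasDerivAt_id' r).const_mul 2).sub_const 1).fun_pow 2).const_mul (κ ^ 2)).congr_deriv
      (by norm_num; ring)
  have hsq : HasDerivAt (fun σ : ℝ ↦ σ ^ 2) (2 * S) S := by simpa using hasDerivAt_pow 2 S
  have hfst : HasFDerivAt Prod.fst (fst ℝ ℝ ℝ) (r, S) := hasFDerivAt_fst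
  have hsnd : HasFDerivAt Prod.snd (snd ℝ ℝ ℝ) (r, S) := hasFDerivAt_snd
  refine ((hhalf.comp_hasFDerivAt (r, S) hfst).mul
    ((hsq.comp_hasFDerivAt (r, S) hsnd).sub
      (hpotential.comp_hasFDerivAt (r, S) hfst))).congr_fderiv ?_
  ext <;> simp <;> ring

theorem two_point_hamiltonian_conserved_general
    (κ : ℝ) {θ r S : ℝ → ℝ} {J : Set ℝ} (hJ : Convex ℝ J)
    (hθ : ∀ t ∈ J, DifferentiableAt ℝ θ (r t))
    (hr : ∀ t ∈ J, HasDerivWithinAt r (S t * θ (r t)) J t)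
    (hS : ∀ t ∈ J, HasDerivWithinAt S
      (2 * κ ^ 2 * (2 * r t - 1) * θ (r t)
        - (1 / 2) * ((S t) ^ 2 - κ ^ 2 * (2 * r t - 1) ^ 2) * deriv θ (r t)) J t)
    {s t : ℝ} (hs : s ∈ J) (ht : t ∈ J) :
    twoPointHamiltonian κ θ (r t, S t) = twoPointHamiltonian κ θ (r s, S s) := by
  refine eq_of_hasDerivWithinAt_zero_of_convex
    (f := fun u ↦ twoPointHamiltonian κ θ (r u, S u)) hJ (fun u hu ↦ ?_) hs ht
  exact hasDerivWithinAt_zero_of_hamilton_equations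
    (hasFDerivAt_twoPointHamiltonian κ (hθ u hu).hasDerivAt (S u)) (hr u hu)
    ((hS u hu).congr_deriv (neg_sub _ _).symm)

/-- Second-order Kuramoto dynamics on the two-point graph:
`dr/dt = S θ(r)`, `dS/dt = 2κ²(2r-1)θ(r) - (1/2)(S² - κ²(2r-1)²)θ'(r)`.
The Hamiltonian `H(r,S) = (θ(r)/2)(S² - κ²(2r-1)²)` is a constant of motion. -/
theorem two_point_hamiltonian_conserved
    (κ : ℝ) (θ : ℝ → ℝ) (hθ : ContDiff ℝ 1 θ)
    (r S : ℝ → ℝ)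
    (hr : ∀ t ≥ (0 : ℝ), HasDerivAt r (S t * θ (r t)) t)
    (hS : ∀ t ≥ (0 : ℝ), HasDerivAt S
      (2 * κ ^ 2 * (2 * r t - 1) * θ (r t)
        - (1 / 2) * ((S t) ^ 2 - κ ^ 2 * (2 * r t - 1) ^ 2) * deriv θ (r t)) t) :
    ∀ t ≥ (0 : ℝ),
      θ (r t) / 2 * ((S t) ^ 2 - κ ^ 2 * (2 * r t - 1) ^ 2)
        = θ (r 0) / 2 * ((S 0) ^ 2 - κ ^ 2 * (2 * r 0 - 1) ^ 2) := by
  exact fun t ht ↦ two_point_hamiltonian_conserved_general κ (convex_Ici 0)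
    (fun _ _ ↦ hθ.differentiable one_ne_zero _) (fun u hu ↦ (hr u hu).hasDerivWithinAt)
    (fun u hu ↦ (hS u hu).hasDerivWithinAt) Set.self_mem_Ici ht
end

section
/- For the second-order Kuramoto dynamics on the two-point graph, assume additionally that θ ≥ 0 and θ(x) > 0 if and only if 0 < x < 1. Let (r, S) : [0,∞) → ℝ² be a differentiable solution whose initial data satisfy S(0) > 0 and H₀ := H(r(0), S(0)) > 0. Then for all t ≥ 0: S(t) > 0, r(t) ∈ (0,1), r is strictly increasing (dr/dt (t) > 0), and lim_{t→∞} r(t) = 1. -/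
/-!
The system is Hamiltonian, so `H = θ(r) / 2 * (S² - V(r))` with `V(r) = κ²(2r - 1)²` is conserved.
Its positivity keeps `θ(r)` and `S` from vanishing, hence `r` stays in `(0, 1)` and `S` stays
positive. Since `V ≥ 0`, conservation also gives `2H ≤ θ(r) S²`, that is `dr/dt ≥ √(2Hθ(r))`: the
speed of `r` is bounded below as long as `r` stays away from `1`, so `r` must converge to `1`.
-/

open Set Filter Topology

section Calculus

theorem mul_sub_le_image_sub_of_le_hasDerivWithinAt {D : Set ℝ} (hD : Convex ℝ D)
    {f f' : ℝ → ℝ} {c : ℝ} (hf : ∀ x ∈ D, HasDerivWithinAt f (f' x) D x)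
    (hc : ∀ x ∈ D, c ≤ f' x) {x y : ℝ} (hx : x ∈ D) (hy : y ∈ D) (hxy : x ≤ y) :
    c * (y - x) ≤ f y - f x := by
  have hasDerivAt_interior (z : ℝ) (hz : z ∈ interior D) : HasDerivAt f (f' z) z :=
    (hf z (interior_subset hz)).hasDerivAt (mem_interior_iff_mem_nhds.1 hz)
  refine hD.mul_sub_le_image_sub_of_le_deriv (fun z hz ↦ (hf z hz).continuousWithinAt)
    (fun z hz ↦ (hasDerivAt_interior z hz).differentiableAt.differentiableWithinAt)
    (fun z hz ↦ ?_) x hx y hy hxy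
  exact (hasDerivAt_interior z hz).deriv ▸ hc z (interior_subset hz)

theorem exists_ge_lt_apply_of_le_hasDerivWithinAt {f f' : ℝ → ℝ} {t₀ c : ℝ} (hc : 0 < c)
    (hf : ∀ t ∈ Ici t₀, HasDerivWithinAt f (f' t) (Ici t₀) t) (hcf : ∀ t ∈ Ici t₀, c ≤ f' t)
    (M : ℝ) : ∃ t ∈ Ici t₀, M < f t := by
  have linear_growth : Tendsto (fun t ↦ f t₀ + c * (t - t₀)) atTop atTop :=
    tendsto_atTop_add_const_left _ _
      ((tendsto_atTop_add_const_right _ _ tendsto_id).const_mul_atTop hc)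
  obtain ⟨t, hMt, ht⟩ :=
    ((linear_growth.eventually_gt_atTop M).and (eventually_ge_atTop t₀)).exists
  have := mul_sub_le_image_sub_of_le_hasDerivWithinAt (convex_Ici t₀) hf hcf self_mem_Ici ht ht
  exact ⟨t, ht, by linarith⟩

theorem tendsto_right_endpoint_of_comp_le_hasDerivWithinAt {g r r' : ℝ → ℝ} {a b t₀ : ℝ}
    (hg : ContinuousOn g (Ioo a b)) (hg_pos : ∀ x ∈ Ioo a b, 0 < g x)
    (hr : ∀ t ∈ Ici t₀, HasDerivWithinAt r (r' t) (Ici t₀) t)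
    (hr_mem : ∀ t ∈ Ici t₀, r t ∈ Ioo a b) (hgr : ∀ t ∈ Ici t₀, g (r t) ≤ r' t) :
    Tendsto r atTop (𝓝 b) := by
  have r_mono : MonotoneOn r (Ici t₀) := fun s hs t ht hst ↦ by
    have := mul_sub_le_image_sub_of_le_hasDerivWithinAt (convex_Ici t₀) hr
      (fun u hu ↦ (hg_pos _ (hr_mem u hu)).le.trans (hgr u hu)) hs ht hst
    linarith
  have exceeds (x : ℝ) (hx : x < b) : ∃ t ∈ Ici t₀, x < r t := by
    by_contra! r_le
    have Icc_subset : Icc (r t₀) x ⊆ Ioo a b := fun y hy ↦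
      ⟨(hr_mem t₀ self_mem_Ici).1.trans_le hy.1, hy.2.trans_lt hx⟩
    obtain ⟨m, hm, g_min⟩ := isCompact_Icc.exists_isMinOn
      (nonempty_Icc.2 (r_le t₀ self_mem_Ici)) (hg.mono Icc_subset)
    have speed_ge (t : ℝ) (ht : t ∈ Ici t₀) : g m ≤ r' t :=
      (g_min ⟨r_mono self_mem_Ici ht ht, r_le t ht⟩).trans (hgr t ht)
    obtain ⟨t, ht, hbt⟩ :=
      exists_ge_lt_apply_of_le_hasDerivWithinAt (hg_pos m (Icc_subset hm)) hr speed_ge b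
    exact hbt.not_gt (hr_mem t ht).2
  refine tendsto_order.2 ⟨fun x hx ↦ ?_, fun x hx ↦ ?_⟩
  · obtain ⟨t, ht, hxt⟩ := exceeds x hx
    filter_upwards [eventually_ge_atTop t] with s hs
    exact hxt.trans_le (r_mono ht (le_trans ht hs) hs)
  · filter_upwards [eventually_ge_atTop t₀] with s hs
    exact (hr_mem s hs).2.trans hx

theorem pos_of_continuousOn_of_ne_zero {X : Type*} [TopologicalSpace X] {D : Set X}
    (hD : IsPreconnected D) {f : X → ℝ} (hf : ContinuousOn f D) (hne : ∀ x ∈ D, f x ≠ 0)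
    {x y : X} (hx : x ∈ D) (hy : y ∈ D) (hfx : 0 < f x) : 0 < f y := by
  by_contra! hfy
  obtain ⟨z, hz, hfz⟩ := hD.intermediate_value hy hx hf ⟨hfy, hfx.le⟩
  exact hne z hz hfz

end Calculus

/-- The energy `θ(x) / 2 * (s² - V(x))` at position `x` and momentum `s`. The two-point Kuramoto
Hamiltonian is the case `V(x) = κ²(2x - 1)²`. -/
noncomputable def hamiltonian (θ V : ℝ → ℝ) (x s : ℝ) : ℝ :=
  θ x / 2 * (s ^ 2 - V x)

/-- `(r, S)` solves Hamilton's equations `dr/dt = ∂H/∂s`, `dS/dt = -∂H/∂x` of `hamiltonian θ V` on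
`[0, ∞)`, with a one-sided derivative at `0`. -/
structure IsHamiltonianTrajectory (θ V r S : ℝ → ℝ) : Prop where
  hasDerivWithinAt_position : ∀ t ∈ Ici (0 : ℝ),
    HasDerivWithinAt r (S t * θ (r t)) (Ici 0) t
  hasDerivWithinAt_momentum : ∀ t ∈ Ici (0 : ℝ),
    HasDerivWithinAt S
      (deriv V (r t) / 2 * θ (r t) - 1 / 2 * (S t ^ 2 - V (r t)) * deriv θ (r t)) (Ici 0) t

section Hamiltonian

variable {θ V : ℝ → ℝ} {x s : ℝ}

theorem two_mul_hamiltonian_le (hθ : 0 ≤ θ x) (hV : 0 ≤ V x) :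
    2 * hamiltonian θ V x s ≤ θ x * s ^ 2 := by
  have := mul_nonneg hθ hV
  unfold hamiltonian
  linarith

theorem pos_of_hamiltonian_pos (hθ : 0 ≤ θ x) (hH : 0 < hamiltonian θ V x s) : 0 < θ x := by
  refine hθ.lt_of_ne' fun h ↦ hH.ne' ?_
  rw [hamiltonian, h, zero_div, zero_mul]

theorem momentum_ne_zero_of_hamiltonian_pos (hθ : 0 ≤ θ x) (hV : 0 ≤ V x)
    (hH : 0 < hamiltonian θ V x s) : s ≠ 0 := by
  rintro rfl
  have := two_mul_hamiltonian_le (s := 0) hθ hV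
  linarith

theorem sqrt_two_mul_hamiltonian_mul_le (hθ : 0 ≤ θ x) (hV : 0 ≤ V x) (hs : 0 ≤ s) :
    √(2 * hamiltonian θ V x s * θ x) ≤ s * θ x := by
  refine Real.sqrt_le_iff.2 ⟨mul_nonneg hs hθ, ?_⟩
  calc
    2 * hamiltonian θ V x s * θ x ≤ θ x * s ^ 2 * θ x :=
      mul_le_mul_of_nonneg_right (two_mul_hamiltonian_le hθ hV) hθ
    _ = (s * θ x) ^ 2 := by ring

end Hamiltonian

namespace IsHamiltonianTrajectory

variable {θ V r S : ℝ → ℝ}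

theorem hasDerivWithinAt_hamiltonian (h : IsHamiltonianTrajectory θ V r S)
    (hθ : Differentiable ℝ θ) (hV : Differentiable ℝ V) {t : ℝ} (ht : t ∈ Ici (0 : ℝ)) :
    HasDerivWithinAt (fun t ↦ hamiltonian θ V (r t) (S t)) 0 (Ici 0) t := by
  have hr := h.hasDerivWithinAt_position t ht
  have hθr := (hθ (r t)).hasDerivAt.comp_hasDerivWithinAt t hr
  have hVr := (hV (r t)).hasDerivAt.comp_hasDerivWithinAt t hr
  have hS_sq := (h.hasDerivWithinAt_momentum t ht).fun_pow 2
  refine ((hθr.div_const 2).mul (hS_sq.sub hVr)).congr_deriv ?_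
  simp only [Function.comp_apply, Pi.sub_apply, Nat.cast_ofNat, Nat.add_one_sub_one, pow_one]
  ring

theorem hamiltonian_eq (h : IsHamiltonianTrajectory θ V r S) (hθ : Differentiable ℝ θ)
    (hV : Differentiable ℝ V) {t : ℝ} (ht : t ∈ Ici (0 : ℝ)) :
    hamiltonian θ V (r t) (S t) = hamiltonian θ V (r 0) (S 0) :=
  constant_of_has_deriv_right_zero
    (fun _ hu ↦ (h.hasDerivWithinAt_hamiltonian hθ hV hu.1).continuousWithinAt.mono
      Icc_subset_Ici_self)
    (fun _ hu ↦ (h.hasDerivWithinAt_hamiltonian hθ hV hu.1).mono (Ici_subset_Ici.2 hu.1))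
    t ⟨ht, le_rfl⟩

theorem momentum_pos (h : IsHamiltonianTrajectory θ V r S) (hθ : Differentiable ℝ θ)
    (hV : Differentiable ℝ V) (hθ_nonneg : ∀ x, 0 ≤ θ x) (hV_nonneg : ∀ x, 0 ≤ V x)
    (hS₀ : 0 < S 0) (hH₀ : 0 < hamiltonian θ V (r 0) (S 0)) {t : ℝ} (ht : t ∈ Ici (0 : ℝ)) :
    0 < S t := by
  have S_ne_zero (u : ℝ) (hu : u ∈ Ici (0 : ℝ)) : S u ≠ 0 :=
    momentum_ne_zero_of_hamiltonian_pos (hθ_nonneg (r u)) (hV_nonneg (r u))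
      (hH₀.trans_eq (h.hamiltonian_eq hθ hV hu).symm)
  exact pos_of_continuousOn_of_ne_zero isPreconnected_Ici
    (fun u hu ↦ (h.hasDerivWithinAt_momentum u hu).continuousWithinAt) S_ne_zero
    self_mem_Ici ht hS₀

end IsHamiltonianTrajectory

theorem two_point_second_order_convergence_general {θ V r S : ℝ → ℝ} {a b : ℝ}
    (hθ : Differentiable ℝ θ) (hV : Differentiable ℝ V) (hV_nonneg : ∀ x, 0 ≤ V x)
    (hθ_nonneg : ∀ x, 0 ≤ θ x) (hθ_pos : ∀ x, 0 < θ x ↔ x ∈ Ioo a b)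
    (h : IsHamiltonianTrajectory θ V r S)
    (hS₀ : 0 < S 0) (hH₀ : 0 < hamiltonian θ V (r 0) (S 0)) :
    (∀ t ≥ (0 : ℝ), 0 < S t ∧ r t ∈ Ioo a b ∧ 0 < S t * θ (r t)) ∧ Tendsto r atTop (𝓝 b) := by
  have S_pos (t : ℝ) (ht : 0 ≤ t) : 0 < S t :=
    h.momentum_pos hθ hV hθ_nonneg hV_nonneg hS₀ hH₀ ht
  have θ_pos (t : ℝ) (ht : 0 ≤ t) : 0 < θ (r t) :=
    pos_of_hamiltonian_pos (hθ_nonneg _) (hH₀.trans_eq (h.hamiltonian_eq hθ hV ht).symm)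
  have r_mem (t : ℝ) (ht : 0 ≤ t) : r t ∈ Ioo a b := (hθ_pos _).1 (θ_pos t ht)
  refine ⟨fun t ht ↦ ⟨S_pos t ht, r_mem t ht, mul_pos (S_pos t ht) (θ_pos t ht)⟩, ?_⟩
  let speedBound (x : ℝ) : ℝ := √(2 * hamiltonian θ V (r 0) (S 0) * θ x)
  have speedBound_cont : Continuous speedBound := (hθ.continuous.const_mul _).sqrt
  have speedBound_pos (x : ℝ) (hx : x ∈ Ioo a b) : 0 < speedBound x :=
    Real.sqrt_pos.2 (mul_pos (mul_pos two_pos hH₀) ((hθ_pos x).2 hx))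
  have speedBound_le (t : ℝ) (ht : 0 ≤ t) : speedBound (r t) ≤ S t * θ (r t) := by
    simpa only [speedBound, h.hamiltonian_eq hθ hV ht] using
      sqrt_two_mul_hamiltonian_mul_le (hθ_nonneg (r t)) (hV_nonneg (r t)) (S_pos t ht).le
  exact tendsto_right_endpoint_of_comp_le_hasDerivWithinAt speedBound_cont.continuousOn
    speedBound_pos h.hasDerivWithinAt_position r_mem speedBound_le

/-- The function `κ²(2x - 1)²` subtracted from `s²` in the two-point Kuramoto Hamiltonian. -/
def twoPointPotential (κ x : ℝ) : ℝ :=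
  κ ^ 2 * (2 * x - 1) ^ 2

theorem twoPointPotential_nonneg (κ x : ℝ) : 0 ≤ twoPointPotential κ x := by
  unfold twoPointPotential
  positivity

theorem hasDerivAt_twoPointPotential (κ x : ℝ) :
    HasDerivAt (twoPointPotential κ) (4 * κ ^ 2 * (2 * x - 1)) x := by
  have hlin : HasDerivAt (fun x : ℝ ↦ 2 * x - 1) (2 * 1) x :=
    ((hasDerivAt_id x).const_mul 2).sub_const 1
  refine ((hlin.fun_pow 2).const_mul (κ ^ 2)).congr_deriv ?_
  push_cast
  ring

theorem isHamiltonianTrajectory_twoPointPotential {κ : ℝ} {θ r S : ℝ → ℝ}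
    (hr : ∀ t ≥ (0 : ℝ), HasDerivWithinAt r (S t * θ (r t)) (Ici 0) t)
    (hS : ∀ t ≥ (0 : ℝ), HasDerivWithinAt S
      (2 * κ ^ 2 * (2 * r t - 1) * θ (r t)
        - (1 / 2) * ((S t) ^ 2 - κ ^ 2 * (2 * r t - 1) ^ 2) * deriv θ (r t)) (Ici 0) t) :
    IsHamiltonianTrajectory θ (twoPointPotential κ) r S where
  hasDerivWithinAt_position := hr
  hasDerivWithinAt_momentum t ht := (hS t ht).congr_deriv <| by
    rw [(hasDerivAt_twoPointPotential κ (r t)).deriv, twoPointPotential]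
    ring

/-- Second-order Kuramoto dynamics on the two-point graph, with
`θ ≥ 0` and `θ(x) > 0 ↔ 0 < x < 1`.  If the initial data satisfy `S(0) > 0` and
`H₀ = H(r(0), S(0)) > 0`, then for all `t ≥ 0`: `S(t) > 0`, `r(t) ∈ (0,1)`, and
`dr/dt(t) = S(t)θ(r(t)) > 0` (so `r` is strictly increasing); moreover `r(t) → 1`
as `t → ∞`. -/
theorem two_point_second_order_convergence
    (κ : ℝ) (θ : ℝ → ℝ) (hθ : ContDiff ℝ 1 θ)
    (hθnn : ∀ x : ℝ, 0 ≤ θ x)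
    (hθpos : ∀ x : ℝ, 0 < θ x ↔ (0 < x ∧ x < 1))
    (r S : ℝ → ℝ)
    (hr : ∀ t ≥ (0 : ℝ), HasDerivAt r (S t * θ (r t)) t)
    (hS : ∀ t ≥ (0 : ℝ), HasDerivAt S
      (2 * κ ^ 2 * (2 * r t - 1) * θ (r t)
        - (1 / 2) * ((S t) ^ 2 - κ ^ 2 * (2 * r t - 1) ^ 2) * deriv θ (r t)) t)
    (hS0 : 0 < S 0)
    (hH0 : 0 < θ (r 0) / 2 * ((S 0) ^ 2 - κ ^ 2 * (2 * r 0 - 1) ^ 2)) :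
    (∀ t ≥ (0 : ℝ), 0 < S t ∧ r t ∈ Set.Ioo (0 : ℝ) 1 ∧ 0 < S t * θ (r t)) ∧
    Filter.Tendsto r Filter.atTop (nhds 1) := by
  exact two_point_second_order_convergence_general (hθ.differentiable one_ne_zero)
    (fun x ↦ (hasDerivAt_twoPointPotential κ x).differentiableAt) (twoPointPotential_nonneg κ)
    hθnn hθpos (isHamiltonianTrajectory_twoPointPotential
      (fun t ht ↦ (hr t ht).hasDerivWithinAt) (fun t ht ↦ (hS t ht).hasDerivWithinAt)) hS0 hH0
end
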